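/- For i.i.d. uniform random points x₁, …, x_N and X in a convex body K ⊂ ℝ^s of volume V, the expected nearest-neighbor distance satisfies E[min_i |X − xᵢ|] ∼ (Γ(s/2+1)^{1/s} Γ(1/s) / (√π s)) (V/N)^{1/s} as N → ∞. -/

import Mathlib

open MeasureTheory Filter

lemma lt_iInf_fin {N : ℕ} (hN : 0 < N) (f : Fin N → ℝ) (t : ℝ) :
    t < ⨅ i, f i ↔ ∀ i, t < f i := by
  have : Nonempty (Fin N) := ⟨⟨0, hN⟩⟩
  constructor
  · intro h i
    exact h.trans_le (ciInf_le (Set.finite_range f).bddBelow i)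
  · intro h
    obtain ⟨i, hi⟩ := exists_eq_ciInf_of_finite (f := f)
    rw [← hi]
    exact h i

lemma tail_eq {E : Type*} [PseudoMetricSpace E] [SecondCountableTopology E] [MeasurableSpace E]
    [BorelSpace E] (μ : Measure E) [IsProbabilityMeasure μ] {N : ℕ} (hN : 0 < N) (t : ℝ) :
    (Measure.pi fun _ : Fin (N + 1) => μ).real
      {ω | t < ⨅ i : Fin N, dist (ω (Fin.last N)) (ω i.castSucc)} =
    ∫ x, (1 - μ.real (Metric.closedBall x t)) ^ N ∂μ := by
  have hmp := measurePreserving_piFinSuccAbove (fun _ : Fin (N + 1) => μ) (Fin.last N)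
  let S : Set (E × (Fin N → E)) := {p | ∀ i, t < dist p.1 (p.2 i)}
  have hS : MeasurableSet S := by
    have : S = ⋂ i, {p | t < dist p.1 (p.2 i)} := by ext; simp [S]
    rw [this]
    refine MeasurableSet.iInter fun i => ?_
    refine measurableSet_lt measurable_const ?_
    exact measurable_fst.dist ((measurable_pi_apply i).comp measurable_snd)
  have hset : {ω : Fin (N + 1) → E | t < ⨅ i : Fin N, dist (ω (Fin.last N)) (ω i.castSucc)} =
      (MeasurableEquiv.piFinSuccAbove (fun _ => E) (Fin.last N)) ⁻¹' S := by
    ext ω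
    simp only [Set.mem_ofPred_eq, Set.mem_preimage, S, lt_iInf_fin hN]
    simp [MeasurableEquiv.piFinSuccAbove, Fin.insertNthEquiv, Fin.init]
  have hm : Measurable fun x => μ (Metric.closedBall x t) := by
    have : MeasurableSet {p : E × E | dist p.2 p.1 ≤ t} :=
      measurableSet_le (measurable_snd.dist measurable_fst) measurable_const
    exact measurable_measure_prodMk_left (ν := μ) this
  have hcomp : ∀ x, μ (Metric.closedBall x t)ᶜ = 1 - μ (Metric.closedBall x t) := fun x =>
    prob_compl_eq_one_sub Metric.isClosed_closedBall.measurableSet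
  have h1 : (Measure.pi fun _ : Fin (N + 1) => μ)
      {ω | t < ⨅ i : Fin N, dist (ω (Fin.last N)) (ω i.castSucc)} =
      ∫⁻ x, (μ (Metric.closedBall x t)ᶜ) ^ N ∂μ := by
    rw [hset, hmp.measure_preimage hS.nullMeasurableSet, Measure.prod_apply hS]
    refine lintegral_congr fun x => ?_
    have : Prod.mk x ⁻¹' S = Set.univ.pi fun _ : Fin N => (Metric.closedBall x t)ᶜ := by
      ext y
      simp [S, dist_comm]
    rw [this]
    exact (Measure.pi_pi _ _).trans (by simp)
  rw [Measure.real, h1, ← integral_toReal]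
  · refine integral_congr_ae (ae_of_all _ fun x => ?_)
    simp only [ENNReal.toReal_pow]
    congr 1
    rw [← Measure.real, measureReal_compl Metric.isClosed_closedBall.measurableSet]
    simp
  · simp_rw [hcomp]
    exact ((measurable_const.sub hm).pow_const N).aemeasurable
  · exact ae_of_all _ fun x => ENNReal.pow_lt_top (measure_lt_top _ _)

lemma expect_eq {E : Type*} [PseudoMetricSpace E] [SecondCountableTopology E] [MeasurableSpace E]
    [BorelSpace E] (μ : Measure E) [IsProbabilityMeasure μ] {N : ℕ} (hN : 0 < N) (D : ℝ)
    (K : Set E) (hK : ∀ᵐ x ∂μ, x ∈ K) (hD : ∀ x ∈ K, ∀ y ∈ K, dist x y ≤ D) :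
    (∫ ω : Fin (N + 1) → E, (⨅ i : Fin N, dist (ω (Fin.last N)) (ω i.castSucc))
        ∂(Measure.pi fun _ : Fin (N + 1) => μ)) = ∫ t in Set.Ioi (0 : ℝ),
     (Measure.pi fun _ : Fin (N + 1) => μ).real
      {ω | t < ⨅ i : Fin N, dist (ω (Fin.last N)) (ω i.castSucc)} := by
  have h0 : ∀ ω : Fin (N + 1) → E,
      0 ≤ ⨅ i : Fin N, dist (ω (Fin.last N)) (ω i.castSucc) := fun ω =>
    Real.iInf_nonneg fun i => dist_nonneg
  refine Integrable.integral_eq_integral_meas_lt ?_ (ae_of_all _ h0)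
  have hall : ∀ᵐ ω ∂(Measure.pi fun _ : Fin (N + 1) => μ), ∀ i, ω i ∈ K := by
    rw [ae_all_iff]
    intro i
    exact (measurePreserving_eval (fun _ : Fin (N + 1) => μ) i).quasiMeasurePreserving.ae hK
  refine Integrable.of_bound (C := D) ?_ ?_
  · refine Measurable.aestronglyMeasurable (Measurable.iInf fun i => ?_)
    exact (measurable_pi_apply _).dist (measurable_pi_apply _)
  · filter_upwards [hall] with ω hω
    rw [Real.norm_of_nonneg (h0 ω)]
    exact (ciInf_le (Set.finite_range _).bddBelow (⟨0, hN⟩ : Fin N)).trans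
      (hD _ (hω _) _ (hω _))

/-- The abstract asymptotic statement. -/
lemma main_limit {E : Type*} [PseudoMetricSpace E] [SecondCountableTopology E]
    [MeasurableSpace E]
    [BorelSpace E] (μ : Measure E) [IsProbabilityMeasure μ] (s : ℕ) (hs : 1 ≤ s) (D : ℝ)
    (hDpos : 0 < D)
    (K : Set E) (hK : ∀ᵐ x ∂μ, x ∈ K) (hD : ∀ x ∈ K, ∀ y ∈ K, dist x y ≤ D)
    (hlow : ∀ x ∈ K, ∀ t, 0 ≤ t → t ≤ D → (t / D) ^ s ≤ μ.real (Metric.closedBall x t))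
    (b : ℝ)
    (hloc : ∀ᵐ x ∂μ, ∃ ε > 0, ∀ t, 0 ≤ t → t ≤ ε → μ.real (Metric.closedBall x t) = b * t ^ s) :
    Tendsto (fun N : ℕ => (N : ℝ) ^ ((1 : ℝ) / s) *
      ∫ ω : Fin (N + 1) → E, (⨅ i : Fin N, dist (ω (Fin.last N)) (ω i.castSucc))
        ∂(Measure.pi fun _ : Fin (N + 1) => μ)) atTop
      (nhds (∫ u in Set.Ioi (0 : ℝ), Real.exp (-b * u ^ (s : ℝ)))) := by
  have hs0 : (0 : ℝ) < s := by exact_mod_cast hs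
  let a : ℕ → ℝ := fun N => ((N : ℝ) ^ ((1 : ℝ) / s))⁻¹
  have hapos : ∀ N : ℕ, 0 < N → 0 < a N := fun N hN => by
    have : (0 : ℝ) < N := by exact_mod_cast hN
    positivity
  have hapow : ∀ N : ℕ, (a N) ^ s = (N : ℝ)⁻¹ := fun N => by
    simp only [a, inv_pow]
    rw [← Real.rpow_natCast, ← Real.rpow_mul (Nat.cast_nonneg N),
      one_div_mul_cancel hs0.ne', Real.rpow_one]
  have hatend : Tendsto a atTop (nhds 0) := by
    refine tendsto_inv_atTop_zero.comp ?_
    exact (tendsto_rpow_atTop (by positivity)).comp tendsto_natCast_atTop_atTop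
  let G : ℕ → ℝ → ℝ := fun N t => (Measure.pi fun _ : Fin (N + 1) => μ).real
      {ω | t < ⨅ i : Fin N, dist (ω (Fin.last N)) (ω i.castSucc)}
  have hGanti : ∀ N, Antitone (G N) := fun N t₁ t₂ h =>
    measureReal_mono (fun ω hω => lt_of_le_of_lt h hω)
  have hmeas : ∀ t, Measurable fun x => μ.real (Metric.closedBall x t) := by
    intro t
    have : MeasurableSet {p : E × E | dist p.2 p.1 ≤ t} :=
      measurableSet_le (measurable_snd.dist measurable_fst) measurable_const
    exact (measurable_measure_prodMk_left (ν := μ) this).ennreal_toReal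
  have hpt : ∀ N : ℕ, 0 < N → ∀ u : ℝ, 0 < u → ∀ x ∈ K,
      (1 - μ.real (Metric.closedBall x (a N * u))) ^ N ≤ Real.exp (-(D ^ s)⁻¹ * u ^ (s : ℝ)) := by
    intro N hN u hu x hx
    have hle1 : μ.real (Metric.closedBall x (a N * u)) ≤ 1 := measureReal_le_one
    rcases le_total (a N * u) D with h | h
    · have h1 := hlow x hx (a N * u) (by have := hapos N hN; positivity) h
      have h2 : 1 - μ.real (Metric.closedBall x (a N * u)) ≤ Real.exp (-((a N * u) / D) ^ s) := by
        have := Real.add_one_le_exp (-((a N * u) / D) ^ s)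
        linarith
      refine (pow_le_pow_left₀ (by linarith) h2 N).trans (le_of_eq ?_)
      rw [← Real.exp_nat_mul]
      congr 1
      have hN' : (N : ℝ) ≠ 0 := by exact_mod_cast hN.ne'
      rw [div_pow, mul_pow, hapow, Real.rpow_natCast]
      field_simp
    · have : μ.real (Metric.closedBall x (a N * u)) = 1 := by
        have : μ (Metric.closedBall x (a N * u)) = 1 := by
          rw [prob_compl_eq_zero_iff Metric.isClosed_closedBall.measurableSet |>.symm]
          refine measure_mono_null ?_ hK
          intro y hy hyK
          exact hy ((hD y hyK x hx).trans h)
        simp [Measure.real, this]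
      rw [this, sub_self, zero_pow hN.ne']
      positivity
  have hEq : ∀ᶠ N : ℕ in atTop, ∫ u in Set.Ioi (0 : ℝ), G N (a N * u) = (N : ℝ) ^ ((1 : ℝ) / s) *
      ∫ ω : Fin (N + 1) → E, (⨅ i : Fin N, dist (ω (Fin.last N)) (ω i.castSucc))
        ∂(Measure.pi fun _ : Fin (N + 1) => μ) := by
    filter_upwards [eventually_gt_atTop 0] with N hN
    rw [integral_comp_mul_left_Ioi _ _ (hapos N hN), expect_eq μ hN D K hK hD]
    simp [a, G]
  refine Tendsto.congr' hEq ?_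
  refine tendsto_integral_filter_of_dominated_convergence
    (fun u : ℝ => Real.exp (-(D ^ s)⁻¹ * u ^ (s : ℝ))) ?_ ?_ ?_ ?_
  · refine Eventually.of_forall fun N => Measurable.aestronglyMeasurable ?_
    exact (hGanti N).measurable.comp (measurable_const.mul measurable_id)
  · filter_upwards [eventually_gt_atTop 0] with N hN
    refine (ae_restrict_iff' measurableSet_Ioi).2 (ae_of_all _ fun u hu => ?_)
    rw [Real.norm_of_nonneg measureReal_nonneg]
    refine (tail_eq μ hN (a N * u)).le.trans ?_
    calc _ ≤ ∫ x, Real.exp (-(D ^ s)⁻¹ * u ^ (s : ℝ)) ∂μ := by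
          refine integral_mono_of_nonneg ?_ (integrable_const _) ?_
          · exact ae_of_all _ fun x => pow_nonneg (sub_nonneg.2 measureReal_le_one) _
          · filter_upwards [hK] with x hx using hpt N hN u hu x hx
      _ = _ := by simp
  · have := integrableOn_rpow_mul_exp_neg_mul_rpow (p := s) (s := 0) (b := (D ^ s)⁻¹)
      (by norm_num) hs0 (by positivity)
    simpa [IntegrableOn] using this
  · refine (ae_restrict_iff' measurableSet_Ioi).2 (ae_of_all _ fun u hu => ?_)
    have hu : 0 < u := hu
    have : (fun N => ∫ x, (1 - μ.real (Metric.closedBall x (a N * u))) ^ N ∂μ) =ᶠ[atTop]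
        fun N => G N (a N * u) := by
      filter_upwards [eventually_gt_atTop 0] with N hN
      exact (tail_eq μ hN _).symm
    refine Tendsto.congr' this ?_
    have hc : Real.exp (-b * u ^ (s : ℝ)) = ∫ x, Real.exp (-b * u ^ (s : ℝ)) ∂μ := by simp
    rw [hc]
    refine tendsto_integral_of_dominated_convergence (fun _ => (1 : ℝ)) ?_
      (integrable_const _) ?_ ?_
    · intro N
      exact ((measurable_const.sub (hmeas _)).pow_const N).aestronglyMeasurable
    · refine fun N => ae_of_all _ fun x => ?_
      have h1 : 0 ≤ 1 - μ.real (Metric.closedBall x (a N * u)) := sub_nonneg.2 measureReal_le_one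
      rw [Real.norm_of_nonneg (pow_nonneg h1 _)]
      have h2 : 0 ≤ μ.real (Metric.closedBall x (a N * u)) := measureReal_nonneg
      exact pow_le_one₀ h1 (by linarith)
    · filter_upwards [hloc] with x hx
      obtain ⟨ε, hε, hx⟩ := hx
      have hev : ∀ᶠ N in atTop, a N * u < ε := by
        have : Tendsto (fun N => a N * u) atTop (nhds 0) := by
          simpa using hatend.mul_const u
        exact this.eventually_lt_const hε
      have := Real.tendsto_one_add_pow_exp_of_tendsto
        (g := fun N => - μ.real (Metric.closedBall x (a N * u))) (t := -b * u ^ (s : ℝ)) ?_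
      · simpa [sub_eq_add_neg] using this
      · refine tendsto_const_nhds.congr' ?_
        filter_upwards [hev, eventually_gt_atTop 0] with N h1 hN
        have := hapos N hN
        have hN' : (N : ℝ) ≠ 0 := by exact_mod_cast hN.ne'
        rw [hx _ (by positivity) h1.le, mul_pow, hapow, Real.rpow_natCast]
        field_simp

theorem stmt_11 (s : ℕ) (hs : 1 ≤ s) (K : Set (EuclideanSpace ℝ (Fin s)))
    (hKconv : Convex ℝ K) (hKcomp : IsCompact K) (hKint : (interior K).Nonempty)
    (V : ℝ) (hV : V = (volume K).toReal) :
    Tendsto (fun N : ℕ =>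
      (∫ ω : Fin (N + 1) → EuclideanSpace ℝ (Fin s),
          (⨅ i : Fin N, dist (ω (Fin.last N)) (ω i.castSucc))
        ∂(Measure.pi fun _ : Fin (N + 1) => (volume K)⁻¹ • volume.restrict K)) /
        ((Real.Gamma ((s : ℝ) / 2 + 1) ^ ((1 : ℝ) / s) * Real.Gamma (1 / s) /
            (Real.sqrt Real.pi * s)) * (V / N) ^ ((1 : ℝ) / s)))
      atTop (nhds 1) := by
  have hs0 : (0 : ℝ) < s := by exact_mod_cast hs
  have : Nonempty (Fin s) := ⟨⟨0, hs⟩⟩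
  have hKtop : volume K ≠ ⊤ := hKcomp.measure_lt_top.ne
  have hK0 : volume K ≠ 0 :=
    (lt_of_lt_of_le (isOpen_interior.measure_pos volume hKint) (measure_mono interior_subset)).ne'
  have hVpos : 0 < V := by rw [hV]; exact ENNReal.toReal_pos hK0 hKtop
  have hKm : MeasurableSet K := hKcomp.isClosed.measurableSet
  set μ : Measure (EuclideanSpace ℝ (Fin s)) := (volume K)⁻¹ • volume.restrict K with hμ
  have : IsProbabilityMeasure μ := ⟨by
    simp [hμ, ENNReal.inv_mul_cancel hK0 hKtop]⟩
  have hμreal : ∀ A, MeasurableSet A → μ.real A = V⁻¹ * volume.real (A ∩ K) := by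
    intro A hA
    simp [hμ, Measure.real, hV, Measure.restrict_apply hA]
  have hKae : ∀ᵐ x ∂μ, x ∈ K := Measure.ae_smul_measure (ae_restrict_mem hKm) _
  have hIntae : ∀ᵐ x ∂μ, x ∈ interior K := by
    refine Measure.ae_smul_measure ?_ _
    have h1 : ∀ᵐ x ∂(volume.restrict K), x ∉ frontier K :=
      ae_restrict_of_ae (measure_eq_zero_iff_ae_notMem.1 (hKconv.addHaar_frontier volume))
    filter_upwards [h1, ae_restrict_mem hKm] with x hx hxK
    by_contra h
    exact hx ⟨subset_closure hxK, h⟩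
  obtain ⟨D, hDpos, hD⟩ : ∃ D : ℝ, 0 < D ∧ ∀ x ∈ K, ∀ y ∈ K, dist x y ≤ D := by
    obtain ⟨C, hC⟩ := Metric.isBounded_iff.1 hKcomp.isBounded
    exact ⟨max C 1, by positivity, fun x hx y hy => (hC hx hy).trans (le_max_left _ _)⟩
  have hlow : ∀ x ∈ K, ∀ t, 0 ≤ t → t ≤ D →
      (t / D) ^ s ≤ μ.real (Metric.closedBall x t) := by
    intro x hx t ht htD
    have hr0 : 0 ≤ t / D := by positivity
    have hr1 : t / D ≤ 1 := (div_le_one hDpos).2 htD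
    have hsub : AffineMap.homothety x (t / D) '' K ⊆ Metric.closedBall x t ∩ K := by
      rintro _ ⟨y, hy, rfl⟩
      constructor
      · rw [Metric.mem_closedBall, AffineMap.homothety_apply]
        simp only [vsub_eq_sub, vadd_eq_add, dist_add_self_left, norm_smul,
          Real.norm_of_nonneg hr0]
        rw [← dist_eq_norm]
        calc t / D * dist y x ≤ t / D * D := by gcongr; exact hD y hy x hx
          _ = t := by field_simp
      · rw [AffineMap.homothety_eq_lineMap]
        exact hKconv.lineMap_mem hx hy ⟨hr0, hr1⟩
    rw [hμreal _ Metric.isClosed_closedBall.measurableSet]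
    have hle : volume.real (AffineMap.homothety x (t / D) '' K) ≤
        volume.real (Metric.closedBall x t ∩ K) :=
      measureReal_mono hsub ((measure_mono Set.inter_subset_right).trans_lt
        hKcomp.measure_lt_top).ne
    have heq : volume.real (AffineMap.homothety x (t / D) '' K) = (t / D) ^ s * V := by
      rw [Measure.real, Measure.addHaar_image_homothety, ENNReal.toReal_mul, ← hV,
        ENNReal.toReal_ofReal (abs_nonneg _), finrank_euclideanSpace_fin,
        abs_of_nonneg (by positivity)]
    rw [heq] at hle
    rw [← div_eq_inv_mul, le_div_iff₀ hVpos]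
    exact hle
  set g : ℝ := Real.Gamma ((s : ℝ) / 2 + 1) with hg
  have hgpos : 0 < g := Real.Gamma_pos_of_pos (by positivity)
  have hsp : 0 < Real.sqrt Real.pi := Real.sqrt_pos.2 Real.pi_pos
  let b : ℝ := V⁻¹ * (Real.sqrt Real.pi ^ s / g)
  have hbpos : 0 < b := by positivity
  have hloc : ∀ᵐ x ∂μ, ∃ ε > 0, ∀ t, 0 ≤ t → t ≤ ε →
      μ.real (Metric.closedBall x t) = b * t ^ s := by
    filter_upwards [hIntae] with x hx
    obtain ⟨ε, hε, hball⟩ := Metric.nhds_basis_closedBall.mem_iff.1 (mem_interior_iff_mem_nhds.1 hx)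
    refine ⟨ε, hε, fun t ht hte => ?_⟩
    rw [hμreal _ Metric.isClosed_closedBall.measurableSet,
      Set.inter_eq_left.2 ((Metric.closedBall_subset_closedBall hte).trans hball),
      Measure.real, EuclideanSpace.volume_closedBall, ENNReal.toReal_mul, ENNReal.toReal_pow,
      ENNReal.toReal_ofReal ht, ENNReal.toReal_ofReal (by rw [Fintype.card_fin]; positivity),
      Fintype.card_fin]
    simp only [b]
    ring
  have hlim := main_limit μ s hs D hDpos K hKae hD hlow b hloc
  rw [integral_exp_neg_mul_rpow hs0 hbpos] at hlim
  have hGpos : 0 < Real.Gamma (1 / (s : ℝ)) := Real.Gamma_pos_of_pos (by positivity)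
  set c : ℝ := g ^ ((1 : ℝ) / s) * Real.Gamma (1 / s) / (Real.sqrt Real.pi * s) *
    V ^ ((1 : ℝ) / s) with hc
  have hcpos : 0 < c := by positivity
  have hcval : b ^ (-1 / (s : ℝ)) * Real.Gamma (1 / (s : ℝ) + 1) = c := by
    have hb : b = (V * g)⁻¹ * Real.sqrt Real.pi ^ s := by
      simp only [b]; field_simp
    rw [Real.Gamma_add_one (by positivity), neg_div, Real.rpow_neg hbpos.le, hb,
      Real.mul_rpow (by positivity) (by positivity), Real.inv_rpow (by positivity),
      Real.mul_rpow hVpos.le hgpos.le, ← Real.rpow_natCast, ← Real.rpow_mul hsp.le,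
      mul_one_div_cancel hs0.ne', Real.rpow_one, hc]
    field_simp
  rw [hcval] at hlim
  have h2 := hlim.div_const c
  rw [div_self hcpos.ne'] at h2
  refine h2.congr' ?_
  filter_upwards [eventually_gt_atTop 0] with N hN
  have hN' : (0 : ℝ) < N := by exact_mod_cast hN
  rw [Real.div_rpow hVpos.le hN'.le, hc]
  have : 0 < (N : ℝ) ^ ((1 : ℝ) / s) := by positivity
  field_simp
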